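/- arXiv:1804.02585 — 4 statements merged into one kernel-verified Lean document; each statement's English description precedes it below -/
import Mathlib

section
/- Let Γ^a_{bc} be a torsion-free affine connection on an open set U ⊆ ℝⁿ, let σ^{ab} be a symmetric C¹ tensor field satisfying the metrisability equations ∇_a σ^{bc} = δ^b_a μ^c + δ^c_a μ^b for some vector field μ, and let ω be a nowhere-vanishing C¹ 1-form on U with σ^{ab}ω_b = 0 pointwise. Then for all indices a, b, c, d: ω_d·∇_c σ^{ab} = −(δ^a_c σ^{be} + δ^b_c σ^{ae})·∇_d ω_e (summation over e). In particular, all first partial derivatives of a degenerate solution σ are determined algebraically by σ and the covariant derivative of ω. -/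
/-- Partial derivative `∂_i f` on `ℝⁿ` (points as `Fin n → ℝ`). -/
noncomputable def pdv {n : ℕ} (i : Fin n) (f : (Fin n → ℝ) → ℝ) (x : Fin n → ℝ) : ℝ :=
  fderiv ℝ f x (Pi.single i 1)

/-- Covariant derivative `∇_a σ^{bc}` of a `(2,0)`-tensor. -/
noncomputable def covUp {n : ℕ} (Γ : Fin n → Fin n → Fin n → (Fin n → ℝ) → ℝ)
    (σ : Fin n → Fin n → (Fin n → ℝ) → ℝ) (a b c : Fin n) (x : Fin n → ℝ) : ℝ :=
  pdv a (σ b c) x + ∑ d, Γ b a d x * σ d c x + ∑ d, Γ c a d x * σ b d x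

/-- Covariant derivative `∇_a ω_b` of a 1-form. -/
noncomputable def covForm {n : ℕ} (Γ : Fin n → Fin n → Fin n → (Fin n → ℝ) → ℝ)
    (ω : Fin n → (Fin n → ℝ) → ℝ) (a b : Fin n) (x : Fin n → ℝ) : ℝ :=
  pdv a (ω b) x - ∑ c, Γ c a b x * ω c x

/-!
Since `σ^{bc} ω_c` vanishes identically, the Leibniz rule and the metrisability equations give
`σ^{bc} ∇_a ω_c = -(δ^b_a μ^c ω_c + μ^b ω_a)`. Suppose `μ^c ω_c ≠ 0`. Then `ω ≠ 0`, so the matrix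
`σ` is singular and there is `ν ≠ 0` with `ν_b σ^{bc} = 0`, whence
`(μ^c ω_c) ν_a + (ν_b μ^b) ω_a = 0`. Contracting with `μ^a` yields `2 (μ^c ω_c) (ν_b μ^b) = 0`, so
`ν_b μ^b = 0` and then `ν = 0`, a contradiction. Hence `σ^{bc} ∇_a ω_c = -μ^b ω_a`, and
substituting this into `ω_d ∇_c σ^{ab} = δ^a_c μ^b ω_d + δ^b_c μ^a ω_d` eliminates `μ`.
-/

open scoped Topology

section LinearAlgebra

open Matrix

variable {ι R : Type*} [Fintype ι] [DecidableEq ι] [CommRing R] [IsDomain R] [NeZero (2 : R)]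

theorem eq_zero_of_vecMul_smul_one_add_vecMulVec_eq_zero {m w ν : ι → R} (hmw : m ⬝ᵥ w ≠ 0)
    (hν : ν ᵥ* ((m ⬝ᵥ w) • (1 : Matrix ι ι R) + vecMulVec m w) = 0) : ν = 0 := by
  have h_covector : (m ⬝ᵥ w) • ν + (ν ⬝ᵥ m) • w = 0 := by
    simpa [vecMul_add, vecMul_smul, vecMul_vecMulVec] using hν
  have h_scalar : 2 * (m ⬝ᵥ w) * (ν ⬝ᵥ m) = 0 := by
    have h := congrArg (· ⬝ᵥ m) h_covector
    simp only [add_dotProduct, smul_dotProduct, zero_dotProduct, smul_eq_mul,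
      dotProduct_comm w m] at h
    linear_combination h
  have hνm : ν ⬝ᵥ m = 0 :=
    (mul_eq_zero.mp h_scalar).resolve_left (mul_ne_zero two_ne_zero hmw)
  simpa [hνm, hmw] using h_covector

theorem dotProduct_eq_zero_of_mulVec_eq_zero_of_mul_eq {S P : Matrix ι ι R} {m w : ι → R}
    (hS : S *ᵥ w = 0) (hSP : S * P = -((m ⬝ᵥ w) • (1 : Matrix ι ι R) + vecMulVec m w)) :
    m ⬝ᵥ w = 0 := by
  by_contra hmw
  have hw : w ≠ 0 := by
    rintro rfl
    exact hmw (dotProduct_zero m)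
  obtain ⟨ν, hν, hνS⟩ :=
    exists_vecMul_eq_zero_iff.mpr (exists_mulVec_eq_zero_iff.mp ⟨w, hw, hS⟩)
  refine hν (eq_zero_of_vecMul_smul_one_add_vecMulVec_eq_zero hmw ?_)
  rw [← neg_eq_zero, ← vecMul_neg, ← hSP, ← vecMul_vecMul, hνS, zero_vecMul]

end LinearAlgebra

section CovariantDerivative

variable {n : ℕ} {x : Fin n → ℝ}

theorem pdv_sum_mul {ι : Type*} [Fintype ι] {f g : ι → (Fin n → ℝ) → ℝ} (i : Fin n)
    (hf : ∀ j, DifferentiableAt ℝ (f j) x) (hg : ∀ j, DifferentiableAt ℝ (g j) x) :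
    pdv i (fun y => ∑ j, f j y * g j y) x
      = ∑ j, pdv i (f j) x * g j x + ∑ j, f j x * pdv i (g j) x := by
  have h_deriv := HasFDerivAt.fun_sum (u := Finset.univ)
    fun j _ => (hf j).hasFDerivAt.fun_mul (hg j).hasFDerivAt
  simp only [pdv, h_deriv.fderiv, sum_apply, add_apply, smul_apply, smul_eq_mul,
    ← Finset.sum_add_distrib]
  exact Finset.sum_congr rfl fun j _ => by ring

/-- Covariant derivative `∇_a v^b` of a vector field, with the index conventions of `covUp`. -/
noncomputable def covVec (Γ : Fin n → Fin n → Fin n → (Fin n → ℝ) → ℝ)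
    (v : Fin n → (Fin n → ℝ) → ℝ) (a b : Fin n) (x : Fin n → ℝ) : ℝ :=
  pdv a (v b) x + ∑ d, Γ b a d x * v d x

variable {Γ : Fin n → Fin n → Fin n → (Fin n → ℝ) → ℝ}
  {σ : Fin n → Fin n → (Fin n → ℝ) → ℝ} {ω v : Fin n → (Fin n → ℝ) → ℝ}

theorem covVec_eq_zero_of_eventually (hv : ∀ b, ∀ᶠ y in 𝓝 x, v b y = 0) (a b : Fin n) :
    covVec Γ v a b x = 0 := by
  have h_pdv : pdv a (v b) x = 0 := by
    have hvb : v b =ᶠ[𝓝 x] fun _ => 0 := hv b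
    simp [pdv, hvb.fderiv_eq]
  simp [covVec, h_pdv, fun d => (hv d).self_of_nhds]

theorem covVec_contraction (hσ : ∀ b c, DifferentiableAt ℝ (σ b c) x)
    (hω : ∀ c, DifferentiableAt ℝ (ω c) x) (a b : Fin n) :
    covVec Γ (fun b y => ∑ c, σ b c y * ω c y) a b x
      = ∑ c, covUp Γ σ a b c x * ω c x + ∑ c, σ b c x * covForm Γ ω a c x := by
  have h_upper : ∑ c, (∑ d, Γ b a d x * σ d c x) * ω c x
      = ∑ d, Γ b a d x * ∑ c, σ d c x * ω c x := by
    simp only [Finset.sum_mul, Finset.mul_sum, mul_assoc]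
    exact Finset.sum_comm
  have h_contracted : ∑ c, (∑ d, Γ c a d x * σ b d x) * ω c x
      = ∑ d, σ b d x * ∑ c, Γ c a d x * ω c x := by
    simp only [Finset.sum_mul, Finset.mul_sum]
    rw [Finset.sum_comm]
    exact Finset.sum_congr rfl fun d _ => Finset.sum_congr rfl fun c _ => by ring
  simp only [covVec, covUp, covForm, pdv_sum_mul a (hσ b) hω, add_mul, mul_sub,
    Finset.sum_add_distrib, Finset.sum_sub_distrib, h_upper, h_contracted]
  ring

end CovariantDerivative

section DegenerateSolution

open Matrix

variable {n : ℕ} {x : Fin n → ℝ} {Γ : Fin n → Fin n → Fin n → (Fin n → ℝ) → ℝ}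
  {σ : Fin n → Fin n → (Fin n → ℝ) → ℝ} {ω : Fin n → (Fin n → ℝ) → ℝ} {m : Fin n → ℝ}

theorem sum_covUp_mul_of_metrisability
    (hmet : ∀ a b c, covUp Γ σ a b c x = (if b = a then m c else 0) + (if c = a then m b else 0))
    (w : Fin n → ℝ) (a b : Fin n) :
    ∑ c, covUp Γ σ a b c x * w c = (if b = a then m ⬝ᵥ w else 0) + m b * w a := by
  simp only [hmet, add_mul, Finset.sum_add_distrib, ite_mul, zero_mul, Finset.sum_ite_eq',
    Finset.mem_univ, if_true]
  split_ifs <;> simp [dotProduct]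

theorem sum_mul_covForm_of_degenerate
    (hσ : ∀ a b, DifferentiableAt ℝ (σ a b) x) (hω : ∀ a, DifferentiableAt ℝ (ω a) x)
    (hmet : ∀ a b c, covUp Γ σ a b c x = (if b = a then m c else 0) + (if c = a then m b else 0))
    (hker : ∀ a, ∀ᶠ y in 𝓝 x, ∑ b, σ a b y * ω b y = 0) (a b : Fin n) :
    ∑ c, σ b c x * covForm Γ ω a c x = -(m b * ω a x) := by
  have h_leibniz (a b : Fin n) : ∑ c, σ b c x * covForm Γ ω a c x
      = -((if b = a then m ⬝ᵥ (ω · x) else 0) + m b * ω a x) := by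
    rw [← sum_covUp_mul_of_metrisability hmet, eq_neg_iff_add_eq_zero, add_comm,
      ← covVec_contraction hσ hω, covVec_eq_zero_of_eventually hker]
  have h_pairing : m ⬝ᵥ (ω · x) = 0 := by
    refine dotProduct_eq_zero_of_mulVec_eq_zero_of_mul_eq
      (S := of fun b c => σ b c x) (P := of fun c a => covForm Γ ω a c x)
      (funext fun b => (hker b).self_of_nhds) (ext fun b a => ?_)
    simpa [mul_apply, one_apply, vecMulVec_apply] using h_leibniz a b
  simpa [h_pairing] using h_leibniz a b

theorem degenerate_solution_derivatives_determined_general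
    (hσ : ∀ a b, DifferentiableAt ℝ (σ a b) x) (hω : ∀ a, DifferentiableAt ℝ (ω a) x)
    (hmet : ∀ a b c, covUp Γ σ a b c x = (if b = a then m c else 0) + (if c = a then m b else 0))
    (hker : ∀ a, ∀ᶠ y in 𝓝 x, ∑ b, σ a b y * ω b y = 0) (a b c d : Fin n) :
    ω d x * covUp Γ σ c a b x
      = -((if a = c then (1 : ℝ) else 0) * (∑ e, σ b e x * covForm Γ ω d e x)
          + (if b = c then (1 : ℝ) else 0) * (∑ e, σ a e x * covForm Γ ω d e x)) := by
  simp only [hmet, sum_mul_covForm_of_degenerate hσ hω hmet hker]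
  split_ifs <;> ring

end DegenerateSolution

/-- For a degenerate solution `σ` of the metrisability equations with kernel
containing the nowhere-vanishing 1-form `ω`, all first derivatives of `σ` are
determined algebraically: `ω_d ∇_c σ^{ab} = −(δ^a_c σ^{be} + δ^b_c σ^{ae}) ∇_d ω_e`. -/
theorem degenerate_solution_derivatives_determined
    (n : ℕ) (U : Set (Fin n → ℝ)) (hU : IsOpen U)
    (Γ : Fin n → Fin n → Fin n → (Fin n → ℝ) → ℝ)
    (hΓsym : ∀ a b c x, Γ a b c x = Γ a c b x)
    (hΓC1 : ∀ a b c, ContDiffOn ℝ 1 (Γ a b c) U)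
    (σ : Fin n → Fin n → (Fin n → ℝ) → ℝ)
    (hσsym : ∀ a b x, σ a b x = σ b a x)
    (hσC1 : ∀ a b, ContDiffOn ℝ 1 (σ a b) U)
    (μ : Fin n → (Fin n → ℝ) → ℝ)
    (hmet : ∀ a b c : Fin n, ∀ x ∈ U,
      covUp Γ σ a b c x
        = (if b = a then μ c x else 0) + (if c = a then μ b x else 0))
    (ω : Fin n → (Fin n → ℝ) → ℝ)
    (hωC1 : ∀ a, ContDiffOn ℝ 1 (ω a) U)
    (hω0 : ∀ x ∈ U, ∃ a, ω a x ≠ 0)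
    (hker : ∀ a : Fin n, ∀ x ∈ U, ∑ b, σ a b x * ω b x = 0) :
    ∀ a b c d : Fin n, ∀ x ∈ U,
      ω d x * covUp Γ σ c a b x
        = -((if a = c then (1 : ℝ) else 0) * (∑ e, σ b e x * covForm Γ ω d e x)
            + (if b = c then (1 : ℝ) else 0) * (∑ e, σ a e x * covForm Γ ω d e x)) := by
  intro a b c d x hx
  have hUx : U ∈ 𝓝 x := hU.mem_nhds hx
  exact degenerate_solution_derivatives_determined_general
    (fun a b => ((hσC1 a b).contDiffAt hUx).differentiableAt one_ne_zero)
    (fun a => ((hωC1 a).contDiffAt hUx).differentiableAt one_ne_zero)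
    (fun a b c => hmet a b c x hx)
    (fun a => Filter.mem_of_superset hUx (hker a)) a b c d
end

section
/- Let Γ^a_{bc} be a torsion-free affine connection on an open set U ⊆ ℝⁿ and let σ^{ab} be a symmetric C¹ tensor field satisfying the metrisability equations ∇_a σ^{bc} = δ^b_a μ^c + δ^c_a μ^b for some vector field μ. Fix 1 ≤ k < n and suppose that σ^{ab} = 0 whenever a > k or b > k, and that the k×k block (σ^{ij})_{i,j ≤ k} is invertible at every point of U. Then Γ^α_{ij} = 0 on U for all α > k and all i, j ≤ k. (The level surfaces of the last n−k coordinates, tangent to the image of σ, are totally geodesic submanifolds.) -/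
/-!
Let `α` be an index of a coordinate whose differential lies in the kernel of `σ`. Since the
components `σ^{αc}` vanish identically, `∇_a σ^{αc}` collapses to `∑ d, Γ^α_{ad} σ^{dc}`, with no
derivative left. The metrisability equation with all indices equal to `α` then gives `μ^α = 0`, and
for `a ≠ α` the remaining equations say that the row `(Γ^α_{ad})_d` is annihilated by `σ`. As `σ` is
supported on an invertible block, the entries of this row indexed by the block vanish.
-/

open Filter Topology

section VecMul

variable {ι κ l m R : Type*} [Fintype ι] [Fintype m]

theorem vecMul_comp_submatrix_of_notMem_range [NonUnitalNonAssocSemiring R] (v : ι → R)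
    {A : Matrix ι κ R} (e : m ↪ ι) (f : l → κ)
    (hA : ∀ a ∉ Set.range e, ∀ b, A a (f b) = 0) :
    Matrix.vecMul (v ∘ e) (A.submatrix e f) = Matrix.vecMul v A ∘ f := by
  ext b
  refine Finset.sum_of_injOn e e.injective.injOn (by simp) (fun a _ ha => ?_) fun _ _ => rfl
  exact mul_eq_zero_of_right _ (hA a (by simpa using ha) b)

theorem comp_eq_zero_of_vecMul_eq_zero [CommRing R] [NoZeroDivisors R] [DecidableEq m] {v : ι → R}
    {A : Matrix ι κ R} (e : m ↪ ι) (f : m → κ)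
    (hA : ∀ a ∉ Set.range e, ∀ b, A a (f b) = 0) (hdet : (A.submatrix e f).det ≠ 0)
    (hv : Matrix.vecMul v A = 0) : v ∘ e = 0 := by
  apply Matrix.eq_zero_of_vecMul_eq_zero hdet
  rw [vecMul_comp_submatrix_of_notMem_range v e f hA, hv, Pi.zero_comp]

end VecMul

section Metrisability

variable {n : ℕ} {Γ : Fin n → Fin n → Fin n → (Fin n → ℝ) → ℝ}
  {σ : Fin n → Fin n → (Fin n → ℝ) → ℝ} {μ x : Fin n → ℝ} {α : Fin n}

theorem pdv_eq_zero_of_eventuallyEq_zero {f : (Fin n → ℝ) → ℝ} (i : Fin n)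
    (hf : f =ᶠ[𝓝 x] 0) : pdv i f x = 0 := by
  simp [pdv, hf.fderiv_eq]

theorem covUp_eq_sum_of_row_eventuallyEq_zero (hrow : ∀ c, σ α c =ᶠ[𝓝 x] 0) (a c : Fin n) :
    covUp Γ σ a α c x = ∑ d, Γ α a d x * σ d c x := by
  have hσ (d : Fin n) : σ α d x = 0 := (hrow d).self_of_nhds
  simp [covUp, pdv_eq_zero_of_eventuallyEq_zero a (hrow c), hσ]

theorem metrisability_vector_eq_zero (hrow : ∀ c, σ α c =ᶠ[𝓝 x] 0) (hcol : ∀ d, σ d α x = 0)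
    (hmet : covUp Γ σ α α α x = μ α + μ α) : μ α = 0 := by
  have hcov : covUp Γ σ α α α x = 0 := by
    simp [covUp_eq_sum_of_row_eventuallyEq_zero hrow, hcol]
  linarith

theorem sum_connection_mul_eq_zero {a : Fin n} (ha : a ≠ α)
    (hrow : ∀ c, σ α c =ᶠ[𝓝 x] 0) (hcol : ∀ d, σ d α x = 0)
    (hmet : ∀ a c, covUp Γ σ a α c x = (if α = a then μ c else 0) + (if c = a then μ α else 0))
    (c : Fin n) : ∑ d, Γ α a d x * σ d c x = 0 := by
  have hμ : μ α = 0 := metrisability_vector_eq_zero hrow hcol (by simpa using hmet α α)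
  rw [← covUp_eq_sum_of_row_eventuallyEq_zero hrow, hmet]
  simp [ha.symm, hμ]

theorem degenerate_solution_totally_geodesic_general {ι : Type*} [Fintype ι] [DecidableEq ι]
    (e : ι ↪ Fin n)
    (hker : ∀ᶠ y in 𝓝 x, ∀ a b, a ∉ Set.range e ∨ b ∉ Set.range e → σ a b y = 0)
    (hblock : (Matrix.of fun i j => σ (e i) (e j) x).det ≠ 0) (hα : α ∉ Set.range e)
    (hmet : ∀ a c, covUp Γ σ a α c x = (if α = a then μ c else 0) + (if c = a then μ α else 0))
    {i : Fin n} (hi : i ≠ α) (j : ι) : Γ α i (e j) x = 0 := by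
  have hrow (c : Fin n) : σ α c =ᶠ[𝓝 x] 0 := hker.mono fun y hy => hy α c (.inl hα)
  have hcol (d : Fin n) : σ d α x = 0 := hker.self_of_nhds d α (.inr hα)
  let S : Matrix (Fin n) (Fin n) ℝ := Matrix.of fun a b => σ a b x
  have hann : Matrix.vecMul (fun d => Γ α i d x) S = 0 :=
    funext (sum_connection_mul_eq_zero hi hrow hcol hmet)
  have hsupp : ∀ a ∉ Set.range e, ∀ b, S a (e b) = 0 := fun a ha b =>
    hker.self_of_nhds a (e b) (.inl ha)
  exact congrFun (comp_eq_zero_of_vecMul_eq_zero e e hsupp hblock hann) j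

end Metrisability

/-- If `σ` is a rank-`k` solution of the metrisability equations whose kernel is
spanned by `dx^{k+1}, …, dxⁿ` (with invertible upper-left `k×k` block), then
`Γ^α_{ij} = 0` for `α > k` and `i, j ≤ k`: the level surfaces of the last `n−k`
coordinates are totally geodesic. -/
theorem degenerate_solution_totally_geodesic
    (n k : ℕ) (hk : 1 ≤ k) (hkn : k < n)
    (U : Set (Fin n → ℝ)) (hU : IsOpen U)
    (Γ : Fin n → Fin n → Fin n → (Fin n → ℝ) → ℝ)
    (hΓsym : ∀ a b c x, Γ a b c x = Γ a c b x)
    (hΓC1 : ∀ a b c, ContDiffOn ℝ 1 (Γ a b c) U)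
    (σ : Fin n → Fin n → (Fin n → ℝ) → ℝ)
    (hσsym : ∀ a b x, σ a b x = σ b a x)
    (hσC1 : ∀ a b, ContDiffOn ℝ 1 (σ a b) U)
    (μ : Fin n → (Fin n → ℝ) → ℝ)
    (hmet : ∀ a b c : Fin n, ∀ x ∈ U,
      covUp Γ σ a b c x
        = (if b = a then μ c x else 0) + (if c = a then μ b x else 0))
    (hker : ∀ a b : Fin n, (k ≤ (a : ℕ) ∨ k ≤ (b : ℕ)) → ∀ x ∈ U, σ a b x = 0)
    (hblock : ∀ x ∈ U,
      (Matrix.of fun i j : Fin k =>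
        σ (Fin.castLE hkn.le i) (Fin.castLE hkn.le j) x).det ≠ 0) :
    ∀ α i j : Fin n, k ≤ (α : ℕ) → (i : ℕ) < k → (j : ℕ) < k →
      ∀ x ∈ U, Γ α i j x = 0 := by
  intro α i j hα hi hj x hx
  refine degenerate_solution_totally_geodesic_general (Fin.castLEEmb hkn.le) ?_ (hblock x hx)
    (by simpa using hα) (hmet · α · x hx) (by omega) ⟨j, hj⟩
  filter_upwards [hU.mem_nhds hx] with y hy a b hab using hker a b (by simpa using hab) y hy
end

section
/- Let Γ^a_{bc} be a smooth torsion-free affine connection on a connected open set U ⊆ ℝⁿ and fix 1 ≤ k < n. Then the set of symmetric C¹ tensor fields σ^{ab} on U that satisfy the metrisability equations ∇_a σ^{bc} = δ^b_a μ^c + δ^c_a μ^b (for some vector field μ) and whose kernel contains the span of dx^{k+1}, …, dxⁿ — i.e. σ^{ab} = 0 whenever a > k or b > k — is a real vector space of dimension at most k(k+1)/2. -/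
/-!
A solution `σ` whose kernel contains some `dx^α` has `σ^{αc} = 0`, so the metrisability equation for
`∇_α σ^{αc}` contains no derivative of `σ` and reads `μ^c = Γ^α_{αd} σ^{dc}`. With `μ` eliminated,
the equations express every partial derivative of `σ` linearly through `σ`, so by Grönwall's
inequality a solution on a connected open set that vanishes at one point vanishes identically. Hence
solutions are determined by their value at a point, a symmetric matrix supported on the indices
outside the kernel.
-/

open Set Filter Topology Module

section LinearDifferentialInequality

variable {E F : Type*} [NormedAddCommGroup E] [NormedSpace ℝ E]
  [NormedAddCommGroup F] [NormedSpace ℝ F] {f : E → F} {s : Set E} {x y : E}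

theorem eq_zero_of_convex_of_norm_hasFDerivWithinAt_le {f' : E → E →L[ℝ] F} {K : ℝ}
    (hs : Convex ℝ s) (hf : ∀ z ∈ s, HasFDerivWithinAt f (f' z) s z)
    (hK : ∀ z ∈ s, ‖f' z‖ ≤ K * ‖f z‖) (hx : x ∈ s) (hy : y ∈ s) (h₀ : f x = 0) : f y = 0 := by
  let γ : ℝ → E := AffineMap.lineMap x y
  have hγ : MapsTo γ (Icc 0 1) s := hs.mapsTo_lineMap hx hy
  have hderiv : ∀ t ∈ Icc (0 : ℝ) 1,
      HasDerivWithinAt (f ∘ γ) (f' (γ t) (y - x)) (Icc 0 1) t := fun t ht ↦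
    (hf _ (hγ ht)).comp_hasDerivWithinAt t AffineMap.hasDerivWithinAt_lineMap hγ
  have hbound : ∀ t ∈ Ico (0 : ℝ) 1, ‖f' (γ t) (y - x)‖ ≤ K * ‖y - x‖ * ‖(f ∘ γ) t‖ := fun t ht ↦
    calc ‖f' (γ t) (y - x)‖ ≤ ‖f' (γ t)‖ * ‖y - x‖ := (f' (γ t)).le_opNorm _
      _ ≤ K * ‖f (γ t)‖ * ‖y - x‖ := by gcongr; exact hK _ (hγ (Ico_subset_Icc_self ht))
      _ = K * ‖y - x‖ * ‖(f ∘ γ) t‖ := mul_right_comm _ _ _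
  have hend := eq_zero_of_abs_deriv_le_mul_abs_self_of_eq_zero_right
    (fun t ht ↦ (hderiv t ht).continuousWithinAt)
    (fun t ht ↦ (hderiv t (Ico_subset_Icc_self ht)).mono_of_mem_nhdsWithin
      (Icc_mem_nhdsGE_of_mem ht))
    (by simpa [γ] using h₀) hbound 1 (right_mem_Icc.2 zero_le_one)
  simpa [γ] using hend

theorem eq_zero_of_isPreconnected_of_norm_fderiv_le {C : E → ℝ} (hs : IsPreconnected s)
    (hso : IsOpen s) (hf : ∀ z ∈ s, DifferentiableAt ℝ f z) (hC : ContinuousOn C s)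
    (hle : ∀ z ∈ s, ‖fderiv ℝ f z‖ ≤ C z * ‖f z‖) (hx : x ∈ s) (hy : y ∈ s) (h₀ : f x = 0) :
    f y = 0 := by
  refine (hs.induction₂ (fun z w ↦ f z = 0 ↔ f w = 0) (fun z hz ↦ ?_)
    (fun _ _ _ _ _ _ ↦ Iff.trans) (fun _ _ _ _ ↦ Iff.symm) hx hy).1 h₀
  have hnhds : ∀ᶠ w in 𝓝 z, w ∈ s ∧ C w < C z + 1 :=
    (hso.eventually_mem hz).and
      ((hC.continuousAt (hso.mem_nhds hz)).eventually_lt_const (lt_add_one _))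
  obtain ⟨r, hr, hball⟩ := Metric.eventually_nhds_iff_ball.1 hnhds
  have hzero {u v : E} (hu : u ∈ Metric.ball z r) (hv : v ∈ Metric.ball z r) (h : f u = 0) :
      f v = 0 := by
    refine eq_zero_of_convex_of_norm_hasFDerivWithinAt_le (convex_ball z r)
      (fun w hw ↦ (hf w (hball w hw).1).hasFDerivAt.hasFDerivWithinAt) (K := C z + 1)
      (fun w hw ↦ (hle w (hball w hw).1).trans ?_) hu hv h
    gcongr
    exact (hball w hw).2.le
  filter_upwards [nhdsWithin_le_nhds (Metric.ball_mem_nhds z hr)] with w hw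
  exact ⟨hzero (Metric.mem_ball_self hr) hw, hzero hw (Metric.mem_ball_self hr)⟩

end LinearDifferentialInequality

theorem abs_sum_mul_le_card_mul {ι : Type*} [Fintype ι] {g h : ι → ℝ} {A B : ℝ}
    (hg : ∀ i, |g i| ≤ A) (hh : ∀ i, |h i| ≤ B) :
    |∑ i, g i * h i| ≤ Fintype.card ι * (A * B) := by
  have hterm (i : ι) : |g i * h i| ≤ A * B :=
    (abs_mul _ _).trans_le <|
      mul_le_mul (hg i) (hh i) (abs_nonneg _) ((abs_nonneg _).trans (hg i))
  calc |∑ i, g i * h i| ≤ ∑ i, |g i * h i| := Finset.abs_sum_le_sum_abs _ _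
    _ ≤ Fintype.card ι * (A * B) := by
      simpa using Finset.sum_le_card_nsmul Finset.univ _ _ fun i _ ↦ hterm i

theorem finrank_sym2_fun (K ι : Type*) [DivisionRing K] [Fintype ι] :
    finrank K (Sym2 ι → K) = Fintype.card ι * (Fintype.card ι + 1) / 2 := by
  classical
  rw [finrank_fintype_fun_eq_card, Sym2.card, Nat.choose_two_right, Nat.add_sub_cancel, mul_comm]

section Metrisability

variable {n : ℕ} {Γ : Fin n → Fin n → Fin n → (Fin n → ℝ) → ℝ} {U : Set (Fin n → ℝ)}
  {σ τ : Fin n → Fin n → (Fin n → ℝ) → ℝ} {μ : Fin n → (Fin n → ℝ) → ℝ}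
  {s : Finset (Fin n)} {x x₀ : Fin n → ℝ} {α : Fin n}

theorem covUp_zero (a b c : Fin n) : covUp Γ 0 a b c x = 0 := by
  simp [covUp, pdv]

theorem covUp_add (hσ : ∀ a b, DifferentiableAt ℝ (σ a b) x)
    (hτ : ∀ a b, DifferentiableAt ℝ (τ a b) x) (a b c : Fin n) :
    covUp Γ (σ + τ) a b c x = covUp Γ σ a b c x + covUp Γ τ a b c x := by
  simp only [covUp, pdv, Pi.add_apply, fderiv_add (hσ b c) (hτ b c),
    add_apply, mul_add, Finset.sum_add_distrib]
  ring

theorem covUp_smul (r : ℝ) (hσ : ∀ a b, DifferentiableAt ℝ (σ a b) x) (a b c : Fin n) :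
    covUp Γ (r • σ) a b c x = r * covUp Γ σ a b c x := by
  simp only [covUp, pdv, Pi.smul_apply, fderiv_const_smul (hσ b c),
    smul_apply, smul_eq_mul, mul_left_comm _ r, ← Finset.mul_sum]
  ring

theorem pdv_eq_zero_of_eqOn {f : (Fin n → ℝ) → ℝ} (hU : IsOpen U) (hf : EqOn f 0 U) (hx : x ∈ U)
    (a : Fin n) : pdv a f x = 0 := by
  simp [pdv, (hf.eventuallyEq_of_mem (hU.mem_nhds hx)).fderiv_eq]

theorem exists_norm_fderiv_le_of_abs_pdv_le (n : ℕ) :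
    ∃ C : ℝ, ∀ {σ : Fin n → Fin n → (Fin n → ℝ) → ℝ} {x : Fin n → ℝ} {M : ℝ}, 0 ≤ M →
      (∀ a b, DifferentiableAt ℝ (σ a b) x) → (∀ a b c, |pdv a (σ b c) x| ≤ M) →
      ‖fderiv ℝ (fun y a b ↦ σ a b y) x‖ ≤ C * M := by
  obtain ⟨C, -, hC⟩ :=
    (Pi.basisFun ℝ (Fin n)).exists_opNorm_le (F := Fin n → Fin n → ℝ)
  refine ⟨C, fun {σ x M} hM hσ hpdv ↦ hC hM fun a ↦ ?_⟩
  have hfderiv : fderiv ℝ (fun y a b ↦ σ a b y) x (Pi.single a 1) =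
      fun b c ↦ pdv a (σ b c) x := by
    rw [fderiv_pi fun b ↦ differentiableAt_pi.2 (hσ b)]
    ext b c
    simp [fderiv_pi (hσ b), pdv]
  rw [Pi.basisFun_apply, hfderiv]
  exact (pi_norm_le_iff_of_nonneg hM).2 fun b ↦ (pi_norm_le_iff_of_nonneg hM).2 fun c ↦
    hpdv a b c

/-- The metrisability equations `∇_a σ^{bc} = δ^b_a μ^c + δ^c_a μ^b` on `U`. -/
def MetrisabilityEquations (Γ : Fin n → Fin n → Fin n → (Fin n → ℝ) → ℝ) (U : Set (Fin n → ℝ))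
    (σ : Fin n → Fin n → (Fin n → ℝ) → ℝ) (μ : Fin n → (Fin n → ℝ) → ℝ) : Prop :=
  ∀ a b c : Fin n, ∀ x ∈ U,
    covUp Γ σ a b c x = (if b = a then μ c x else 0) + (if c = a then μ b x else 0)

namespace MetrisabilityEquations

theorem mu_eq_sum_of_eqOn_zero (hμ : MetrisabilityEquations Γ U σ μ) (hU : IsOpen U)
    (hrow : ∀ b, EqOn (σ α b) 0 U) (hcol : ∀ b, EqOn (σ b α) 0 U) (hx : x ∈ U) (c : Fin n) :
    μ c x = ∑ d, Γ α α d x * σ d c x := by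
  have heq := hμ α α c x hx
  have hrow_sum : ∑ d, Γ c α d x * σ α d x = 0 :=
    Finset.sum_eq_zero fun d _ ↦ by simp [hrow d hx]
  rw [covUp, pdv_eq_zero_of_eqOn hU (hrow c) hx, hrow_sum, zero_add, add_zero, if_pos rfl] at heq
  by_cases hc : c = α
  · subst hc
    have hcol_sum : ∑ d, Γ c c d x * σ d c x = 0 :=
      Finset.sum_eq_zero fun d _ ↦ by simp [hcol d hx]
    rw [hcol_sum, if_pos rfl] at heq
    linarith
  · rw [heq, if_neg hc, add_zero]

theorem abs_pdv_le (hμ : MetrisabilityEquations Γ U σ μ) (hU : IsOpen U)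
    (hrow : ∀ b, EqOn (σ α b) 0 U) (hcol : ∀ b, EqOn (σ b α) 0 U) (hx : x ∈ U) {A B : ℝ}
    (hΓ : ∀ a b c, |Γ a b c x| ≤ A) (hσ : ∀ a b, |σ a b x| ≤ B) (a b c : Fin n) :
    |pdv a (σ b c) x| ≤ 4 * (n * (A * B)) := by
  have hcontr {g h : Fin n → ℝ} (hg : ∀ d, |g d| ≤ A) (hh : ∀ d, |h d| ≤ B) :
      |∑ d, g d * h d| ≤ n * (A * B) := by
    simpa using abs_sum_mul_le_card_mul hg hh
  have hμ_le (e : Fin n) : |μ e x| ≤ n * (A * B) := by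
    rw [hμ.mu_eq_sum_of_eqOn_zero hU hrow hcol hx e]
    exact hcontr (hΓ α α) fun d ↦ hσ d e
  have hδμ_le (p : Prop) [Decidable p] (e : Fin n) :
      |if p then μ e x else 0| ≤ n * (A * B) := by
    split_ifs
    · exact hμ_le e
    · simpa using (abs_nonneg _).trans (hμ_le e)
  have heq := hμ a b c x hx
  rw [covUp] at heq
  have h₁ := abs_le.1 (hcontr (hΓ b a) fun d ↦ hσ d c)
  have h₂ := abs_le.1 (hcontr (hΓ c a) (hσ b))
  have h₃ := abs_le.1 (hδμ_le (b = a) c)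
  have h₄ := abs_le.1 (hδμ_le (c = a) b)
  exact abs_le.2 ⟨by linarith, by linarith⟩

theorem eq_zero_of_apply_eq_zero (hμ : MetrisabilityEquations Γ U σ μ) (hU : IsOpen U)
    (hconn : IsPreconnected U) (hΓ : ∀ a b c, ContinuousOn (Γ a b c) U)
    (hσ : ∀ a b, ∀ x ∈ U, DifferentiableAt ℝ (σ a b) x)
    (hrow : ∀ b, EqOn (σ α b) 0 U) (hcol : ∀ b, EqOn (σ b α) 0 U)
    (hx₀ : x₀ ∈ U) (h₀ : ∀ a b, σ a b x₀ = 0) (hx : x ∈ U) (a b : Fin n) : σ a b x = 0 := by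
  obtain ⟨C, hC⟩ := exists_norm_fderiv_le_of_abs_pdv_le n
  let normΓ : (Fin n → ℝ) → ℝ := fun y ↦ ‖fun a b c ↦ Γ a b c y‖
  have hnormΓ : ContinuousOn normΓ U :=
    (continuousOn_pi.2 fun a ↦ continuousOn_pi.2 fun b ↦ continuousOn_pi.2 (hΓ a b)).norm
  have hΓ_le (y) (a b c : Fin n) : |Γ a b c y| ≤ normΓ y :=
    ((norm_le_pi_norm (fun c ↦ Γ a b c y) c).trans
      (norm_le_pi_norm (fun b c ↦ Γ a b c y) b)).trans
      (norm_le_pi_norm (fun a b c ↦ Γ a b c y) a)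
  have hσ_le (y) (a b : Fin n) : |σ a b y| ≤ ‖fun a b ↦ σ a b y‖ :=
    (norm_le_pi_norm (fun b ↦ σ a b y) b).trans (norm_le_pi_norm (fun a b ↦ σ a b y) a)
  have hfderiv_le : ∀ y ∈ U, ‖fderiv ℝ (fun y a b ↦ σ a b y) y‖ ≤
      C * (4 * (n * normΓ y)) * ‖fun a b ↦ σ a b y‖ := fun y hy ↦
    calc ‖fderiv ℝ (fun y a b ↦ σ a b y) y‖
        ≤ C * (4 * (n * (normΓ y * ‖fun a b ↦ σ a b y‖))) :=
          hC (by positivity) (fun a b ↦ hσ a b y hy)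
            (hμ.abs_pdv_le hU hrow hcol hy (hΓ_le y) (hσ_le y))
      _ = C * (4 * (n * normΓ y)) * ‖fun a b ↦ σ a b y‖ := by ring
  have hσx : (fun a b ↦ σ a b x) = 0 :=
    eq_zero_of_isPreconnected_of_norm_fderiv_le (f := fun y a b ↦ σ a b y) hconn hU
      (fun y hy ↦ differentiableAt_pi.2 fun a ↦ differentiableAt_pi.2 fun b ↦ hσ a b y hy)
      (by fun_prop) hfderiv_le hx₀ hx (funext₂ h₀)
  exact congrFun₂ hσx a b

end MetrisabilityEquations

/-- A symmetric solution `σ` of the metrisability equations on `U` with `dx^a` in its kernel for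
every `a ∉ s`. Only the first index is constrained in `eqOn_zero`, as `σ` is symmetric. -/
structure IsDegenerateSolution (Γ : Fin n → Fin n → Fin n → (Fin n → ℝ) → ℝ)
    (U : Set (Fin n → ℝ)) (s : Finset (Fin n)) (σ : Fin n → Fin n → (Fin n → ℝ) → ℝ) : Prop where
  differentiableAt : ∀ a b, ∀ x ∈ U, DifferentiableAt ℝ (σ a b) x
  symm : ∀ a b, ∀ x ∈ U, σ a b x = σ b a x
  exists_metrisabilityEquations : ∃ μ, MetrisabilityEquations Γ U σ μ
  eqOn_zero : ∀ a ∉ s, ∀ b, EqOn (σ a b) 0 U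

/-- The vector space of degenerate solutions. Its elements are functions on all of `ℝⁿ`, with
arbitrary values outside `U`, so only their restrictions to `U` form a finite-dimensional space. -/
def degenerateSolutions (Γ : Fin n → Fin n → Fin n → (Fin n → ℝ) → ℝ) (U : Set (Fin n → ℝ))
    (s : Finset (Fin n)) : Submodule ℝ (Fin n → Fin n → (Fin n → ℝ) → ℝ) where
  carrier := {σ | IsDegenerateSolution Γ U s σ}
  zero_mem' :=
    { differentiableAt := fun _ _ _ _ ↦ differentiableAt_const 0
      symm := fun _ _ _ _ ↦ rfl
      exists_metrisabilityEquations := ⟨0, fun a b c x _ ↦ by simp [covUp_zero]⟩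
      eqOn_zero := fun _ _ _ _ _ ↦ rfl }
  add_mem' := fun {σ τ} hσ hτ ↦
    { differentiableAt := fun a b x hx ↦
        (hσ.differentiableAt a b x hx).add (hτ.differentiableAt a b x hx)
      symm := fun a b x hx ↦ congrArg₂ (· + ·) (hσ.symm a b x hx) (hτ.symm a b x hx)
      exists_metrisabilityEquations := by
        obtain ⟨μ, hμ⟩ := hσ.exists_metrisabilityEquations
        obtain ⟨ν, hν⟩ := hτ.exists_metrisabilityEquations
        refine ⟨μ + ν, fun a b c x hx ↦ ?_⟩
        rw [covUp_add (fun a b ↦ hσ.differentiableAt a b x hx)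
          (fun a b ↦ hτ.differentiableAt a b x hx), hμ a b c x hx, hν a b c x hx]
        simp only [Pi.add_apply]
        split_ifs <;> ring
      eqOn_zero := fun a ha b x hx ↦ by simp [hσ.eqOn_zero a ha b hx, hτ.eqOn_zero a ha b hx] }
  smul_mem' := fun r σ hσ ↦
    { differentiableAt := fun a b x hx ↦ (hσ.differentiableAt a b x hx).const_smul r
      symm := fun a b x hx ↦ congrArg (r • ·) (hσ.symm a b x hx)
      exists_metrisabilityEquations := by
        obtain ⟨μ, hμ⟩ := hσ.exists_metrisabilityEquations
        refine ⟨r • μ, fun a b c x hx ↦ ?_⟩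
        rw [covUp_smul r fun a b ↦ hσ.differentiableAt a b x hx, hμ a b c x hx]
        simp only [Pi.smul_apply, smul_eq_mul]
        split_ifs <;> ring
      eqOn_zero := fun a ha b x hx ↦ by simp [hσ.eqOn_zero a ha b hx] }

namespace degenerateSolutions

/-- The components `σ^{ab}` with `a, b ∈ s` of a degenerate solution at a point of `U`, as a
function on unordered pairs of indices. -/
def evalAt (hx : x ∈ U) : degenerateSolutions Γ U s →ₗ[ℝ] (Sym2 s → ℝ) where
  toFun σ := Sym2.lift ⟨fun a b ↦ σ.1 a b x, fun a b ↦ σ.2.symm a b x hx⟩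
  map_add' _ _ := funext <| Sym2.ind fun _ _ ↦ rfl
  map_smul' _ _ := funext <| Sym2.ind fun _ _ ↦ rfl

theorem eq_zero_of_evalAt_eq_zero (hU : IsOpen U) (hconn : IsPreconnected U)
    (hΓ : ∀ a b c, ContinuousOn (Γ a b c) U) (hα : α ∉ s) (hx₀ : x₀ ∈ U)
    {σ : degenerateSolutions Γ U s} (h₀ : evalAt hx₀ σ = 0) (hx : x ∈ U) (a b : Fin n) :
    σ.1 a b x = 0 := by
  obtain ⟨σ, hσ⟩ := σ
  obtain ⟨μ, hμ⟩ := hσ.exists_metrisabilityEquations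
  have hcol (a b) (hb : b ∉ s) : EqOn (σ a b) 0 U := fun y hy ↦
    (hσ.symm a b y hy).trans (hσ.eqOn_zero b hb a hy)
  refine hμ.eq_zero_of_apply_eq_zero hU hconn hΓ hσ.differentiableAt (hσ.eqOn_zero α hα)
    (fun b ↦ hcol b α hα) hx₀ (fun a b ↦ ?_) hx a b
  by_cases ha : a ∈ s
  · by_cases hb : b ∈ s
    · exact congrFun h₀ s(⟨a, ha⟩, ⟨b, hb⟩)
    · exact hcol a b hb hx₀
  · exact hσ.eqOn_zero a ha b hx₀

end degenerateSolutions

theorem dimension_bound_degenerate_metrisability_solutions_general {ι : Type*} [Fintype ι]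
    (hU : IsOpen U) (hconn : IsConnected U) (hΓ : ∀ a b c, ContinuousOn (Γ a b c) U)
    (hα : α ∉ s) (hι : s.card * (s.card + 1) / 2 < Fintype.card ι)
    {σ : ι → Fin n → Fin n → (Fin n → ℝ) → ℝ} (hσ : ∀ i, IsDegenerateSolution Γ U s (σ i)) :
    ∃ c : ι → ℝ, c ≠ 0 ∧ ∀ a b : Fin n, ∀ x ∈ U, ∑ i, c i * σ i a b x = 0 := by
  obtain ⟨x₀, hx₀⟩ := hconn.nonempty
  let σ' (i : ι) : degenerateSolutions Γ U s := ⟨σ i, hσ i⟩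
  have hdep : ¬LinearIndependent ℝ fun i ↦ degenerateSolutions.evalAt hx₀ (σ' i) := fun hind ↦ by
    have hcard := hind.fintype_card_le_finrank
    rw [finrank_sym2_fun, Fintype.card_coe] at hcard
    exact hι.not_ge hcard
  obtain ⟨c, hc, i, hi⟩ := Fintype.not_linearIndependent_iff.1 hdep
  have hsum : degenerateSolutions.evalAt hx₀ (∑ i, c i • σ' i) = 0 := by
    simpa only [map_sum, map_smul] using hc
  refine ⟨c, fun h ↦ hi (congrFun h i), fun a b x hx ↦ ?_⟩
  simpa [σ'] using degenerateSolutions.eq_zero_of_evalAt_eq_zero hU hconn.isPreconnected hΓ hα hx₀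
    hsum hx a b

end Metrisability

/-- The solutions of the metrisability equations whose kernel contains the span of
`dx^{k+1}, …, dxⁿ` form a vector space of dimension at most `k(k+1)/2`: any
`k(k+1)/2 + 1` such solutions are linearly dependent on `U`. -/
theorem dimension_bound_degenerate_metrisability_solutions
    (n k : ℕ) (hk : 1 ≤ k) (hkn : k < n)
    (U : Set (Fin n → ℝ)) (hU : IsOpen U) (hconn : IsConnected U)
    (Γ : Fin n → Fin n → Fin n → (Fin n → ℝ) → ℝ)
    (hΓsym : ∀ a b c x, Γ a b c x = Γ a c b x)
    (hΓ : ∀ a b c, ContDiffOn ℝ (⊤ : ℕ∞) (Γ a b c) U)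
    (σ : Fin (k * (k + 1) / 2 + 1) → Fin n → Fin n → (Fin n → ℝ) → ℝ)
    (hσsym : ∀ i a b x, σ i a b x = σ i b a x)
    (hσC1 : ∀ i a b, ContDiffOn ℝ 1 (σ i a b) U)
    (hmet : ∀ i, ∃ μ : Fin n → (Fin n → ℝ) → ℝ, ∀ a b c : Fin n, ∀ x ∈ U,
      covUp Γ (σ i) a b c x
        = (if b = a then μ c x else 0) + (if c = a then μ b x else 0))
    (hker : ∀ i, ∀ a b : Fin n, (k ≤ (a : ℕ) ∨ k ≤ (b : ℕ)) →
      ∀ x ∈ U, σ i a b x = 0) :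
    ∃ c : Fin (k * (k + 1) / 2 + 1) → ℝ, c ≠ 0 ∧
      ∀ a b : Fin n, ∀ x ∈ U, ∑ i, c i * σ i a b x = 0 := by
  have hσ (i) : IsDegenerateSolution Γ U {a | (a : ℕ) < k} (σ i) :=
    { differentiableAt a b x hx :=
        ((hσC1 i a b).differentiableOn one_ne_zero).differentiableAt (hU.mem_nhds hx)
      symm a b x _ := hσsym i a b x
      exists_metrisabilityEquations := hmet i
      eqOn_zero a ha b := hker i a b (.inl (by simpa using ha)) }
  exact dimension_bound_degenerate_metrisability_solutions_general hU hconn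
    (fun a b c ↦ (hΓ a b c).continuousOn) (α := ⟨k, hkn⟩) (by simp)
    (by simp [Fin.card_filter_val_lt, hkn.le]) hσ
end

section
/- Let n ≥ 3 and let Γ be the torsion-free affine connection on ℝⁿ (coordinates x¹, …, xⁿ) whose only nonzero components are Γ¹_{nn} = −x²/2 and Γ²_{nn} = −x¹/2 (the Newtonian connection of the potential V = x¹x²). Then a symmetric C¹ tensor field σ^{ab} on ℝⁿ satisfies the metrisability equations ∇_a σ^{bc} = δ^b_a μ^c + δ^c_a μ^b for some vector field μ if and only if σ^{an} = 0 for all a and all components σ^{kl} with k, l ≤ n − 1 are constant. In particular the solution space of the metrisability equations of this connection has dimension exactly n(n−1)/2, and every solution is degenerate. -/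
/-- The Newtonian connection on `ℝⁿ` (`n = m + 3`) of the potential `V = x¹x²`:
the only nonzero components are `Γ¹_{nn} = −x²/2` and `Γ²_{nn} = −x¹/2`. -/
noncomputable def newtonGamma (m : ℕ) :
    Fin (m + 3) → Fin (m + 3) → Fin (m + 3) → (Fin (m + 3) → ℝ) → ℝ :=
  fun a b c x =>
    if a = 0 ∧ b = Fin.last (m + 2) ∧ c = Fin.last (m + 2) then -(x 1) / 2
    else if a = 1 ∧ b = Fin.last (m + 2) ∧ c = Fin.last (m + 2) then -(x 0) / 2
    else 0

/-- The metrisability equations for the Newtonian connection. -/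
def NewtonMet (m : ℕ) (σ : Fin (m + 3) → Fin (m + 3) → (Fin (m + 3) → ℝ) → ℝ) : Prop :=
  ∃ μ : Fin (m + 3) → (Fin (m + 3) → ℝ) → ℝ, ∀ (a b c : Fin (m + 3)) (x : Fin (m + 3) → ℝ),
    covUp (newtonGamma m) σ a b c x
      = (if b = a then μ c x else 0) + (if c = a then μ b x else 0)

/-- A symmetric `C¹` solution of the metrisability equations of the Newtonian
connection. -/
def NewtonSol (m : ℕ) (σ : Fin (m + 3) → Fin (m + 3) → (Fin (m + 3) → ℝ) → ℝ) : Prop :=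
  (∀ a b x, σ a b x = σ b a x) ∧ (∀ a b, ContDiff ℝ 1 (σ a b)) ∧ NewtonMet m σ

/-!
Let `N` be the time index of a Newtonian connection with `Γ^a_{NN} = G^a` and `G^N = 0`, and suppose
that `∇_a σ^{bc} = δ^b_a μ^c + δ^c_a μ^b`. For a space index `k` the equations with `a = k` contain
no `Γ`, so `σ^{bc}`, together with all its derivatives, is unchanged by translations along `x^k` as
soon as `b, c ≠ k`. Subtracting from an equation its translate along `x^k` therefore leaves only the
increment of `G`:
* `∂_i σ^{ii} = 2 μ^i` and `∂_N σ^{iN} + G^i σ^{NN} = μ^i` give `(G^i(y) - G^i(x)) σ^{NN} = 0`, and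
  then `μ^N = 0`, so that all `σ^{jN}` are invariant along space as well;
* `∂_N σ^{ij} + G^i σ^{jN} + G^j σ^{iN} = 0` gives `(G^i(y) - G^i(x)) σ^{jN} = 0`, first for `j = i`
  and then for every `j ≠ k`.

If `G` couples the coordinates, all `σ^{jN}` vanish, hence so does `μ`, and `σ` is constant.
-/

section LinearAlgebra

variable {K V : Type*} [Field K] [AddCommGroup V] [Module K V]

theorem exists_sum_smul_eq_zero_of_finrank_lt {ι : Type*} [Fintype ι] {W : Submodule K V}
    [FiniteDimensional K W] {v : ι → V} (hv : ∀ i, v i ∈ W)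
    (h : Module.finrank K W < Fintype.card ι) :
    ∃ c : ι → K, c ≠ 0 ∧ ∑ i, c i • v i = 0 := by
  have hdep : ¬ LinearIndependent K v := fun hli =>
    have hli' : LinearIndependent K fun i => (⟨v i, hv i⟩ : W) := hli.of_comp W.subtype
    h.not_ge hli'.fintype_card_le_finrank
  obtain ⟨c, hsum, hc⟩ := Fintype.not_linearIndependent_iff.1 hdep
  exact ⟨c, Function.ne_iff.2 hc, hsum⟩

theorem exists_linearIndependent_fin_finrank (W : Submodule K V)
    [FiniteDimensional K W] :
    ∃ v : Fin (Module.finrank K W) → V, (∀ i, v i ∈ W) ∧ LinearIndependent K v :=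
  let b := Module.finBasis K W
  ⟨fun i => b i, fun i => (b i).2, b.linearIndependent.map' W.subtype W.ker_subtype⟩

end LinearAlgebra

section PartialDerivatives

variable {n : ℕ} {k : Fin n} {f : (Fin n → ℝ) → ℝ}

theorem apply_add_single_of_pdv_eq_zero (hf : Differentiable ℝ f) (h : ∀ x, pdv k f x = 0)
    (x : Fin n → ℝ) (t : ℝ) : f (x + Pi.single k t) = f x := by
  have hderiv (s : ℝ) : HasDerivAt (fun s => f (x + Pi.single k s)) 0 s := by
    have := (hf _).hasFDerivAt.comp_hasDerivAt s ((hasDerivAt_single k s).const_add x)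
    rwa [show fderiv ℝ f (x + Pi.single k s) (Pi.single k 1) = 0 from h _] at this
  simpa using is_const_of_deriv_eq_zero (fun s => (hderiv s).differentiableAt)
    (fun s => (hderiv s).deriv) t 0

theorem pdv_add_single_of_pdv_eq_zero (hf : Differentiable ℝ f) (h : ∀ x, pdv k f x = 0)
    (a : Fin n) (x : Fin n → ℝ) (t : ℝ) : pdv a f (x + Pi.single k t) = pdv a f x := by
  have hinv : (fun y => f (y + Pi.single k t)) = f :=
    funext fun y => apply_add_single_of_pdv_eq_zero hf h y t
  rw [pdv, ← fderiv_comp_add_right, hinv, pdv]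

theorem apply_eq_apply_of_pdv_eq_zero (hf : Differentiable ℝ f) (h : ∀ a x, pdv a f x = 0)
    (x y : Fin n → ℝ) : f x = f y := by
  refine is_const_of_fderiv_eq_zero hf (fun z => ?_) x y
  apply ContinuousLinearMap.coe_injective
  exact (Pi.basisFun ℝ (Fin n)).ext fun a => by simpa [pdv] using h a z

theorem pdv_eq_zero_of_forall_eq (h : ∀ x y, f x = f y) (a : Fin n) (x : Fin n → ℝ) :
    pdv a f x = 0 := by
  have hf : f = fun _ => f 0 := funext fun y => h y 0
  rw [hf]
  simp [pdv]

end PartialDerivatives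

section NewtonianConnection

variable {n : ℕ} {N : Fin n} {G : Fin n → (Fin n → ℝ) → ℝ}
  {σ : Fin n → Fin n → (Fin n → ℝ) → ℝ} {μ : Fin n → (Fin n → ℝ) → ℝ}

/-- The connection with time index `N` whose only nonzero components are `Γ^a_{NN} = G^a`; its
geodesics parametrised by time are the motions under the force `-G` when `G^N = 0`. -/
def newtonianConnection (N : Fin n) (G : Fin n → (Fin n → ℝ) → ℝ) :
    Fin n → Fin n → Fin n → (Fin n → ℝ) → ℝ :=
  fun a b c x => if b = N ∧ c = N then G a x else 0

/-- A force field without time component is coupled if for every index `j`, on a line through any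
given point in some direction `k ≠ j` of space, some component `G^i` with `i ≠ k` is not constant.
This excludes the separated forces, where each `G^i` depends on `x^i` and time only. -/
structure IsCoupledForce (N : Fin n) (G : Fin n → (Fin n → ℝ) → ℝ) : Prop where
  time_eq_zero : ∀ x, G N x = 0
  exists_ne : ∀ j x, ∃ i k, ∃ t : ℝ, k ≠ N ∧ k ≠ i ∧ k ≠ j ∧ G i (x + Pi.single k t) ≠ G i x

theorem IsCoupledForce.ne_time_of_apply_ne (hG : IsCoupledForce N G) {i : Fin n}
    {x y : Fin n → ℝ} (h : G i y ≠ G i x) : i ≠ N := by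
  rintro rfl
  simp [hG.time_eq_zero] at h

/-- The metrisability equations `∇_a σ^{bc} = δ^b_a μ^c + δ^c_a μ^b` with prescribed `μ`. -/
def MetrisabilityEqWith (Γ : Fin n → Fin n → Fin n → (Fin n → ℝ) → ℝ)
    (σ : Fin n → Fin n → (Fin n → ℝ) → ℝ) (μ : Fin n → (Fin n → ℝ) → ℝ) : Prop :=
  ∀ a b c x, covUp Γ σ a b c x = (if b = a then μ c x else 0) + (if c = a then μ b x else 0)

/-- The metrisability equations for `σ`, with the vector field `μ` left free. -/
def MetrisabilityEq (Γ : Fin n → Fin n → Fin n → (Fin n → ℝ) → ℝ)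
    (σ : Fin n → Fin n → (Fin n → ℝ) → ℝ) : Prop :=
  ∃ μ, MetrisabilityEqWith Γ σ μ

/-- The symmetric differentiable solutions of the metrisability equations. -/
structure IsMetrisabilitySolution (Γ : Fin n → Fin n → Fin n → (Fin n → ℝ) → ℝ)
    (σ : Fin n → Fin n → (Fin n → ℝ) → ℝ) : Prop where
  symm : ∀ a b x, σ a b x = σ b a x
  differentiable : ∀ a b, Differentiable ℝ (σ a b)
  metrisabilityEq : MetrisabilityEq Γ σ

theorem covUp_newtonianConnection (a b c : Fin n) (x : Fin n → ℝ) :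
    covUp (newtonianConnection N G) σ a b c x =
      pdv a (σ b c) x + if a = N then G b x * σ N c x + G c x * σ b N x else 0 := by
  by_cases ha : a = N <;> simp [covUp, newtonianConnection, ha, add_assoc]

namespace MetrisabilityEqWith

theorem pdv_eq_zero (h : MetrisabilityEqWith (newtonianConnection N G) σ μ) {k b c : Fin n}
    (hkN : k ≠ N) (hkb : k ≠ b) (hkc : k ≠ c) (x : Fin n → ℝ) : pdv k (σ b c) x = 0 := by
  simpa [covUp_newtonianConnection, hkN, hkb.symm, hkc.symm] using h k b c x

theorem pdv_self_self (h : MetrisabilityEqWith (newtonianConnection N G) σ μ) {i : Fin n}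
    (hiN : i ≠ N) (x : Fin n → ℝ) : pdv i (σ i i) x = μ i x + μ i x := by
  simpa [covUp_newtonianConnection, hiN] using h i i i x

theorem pdv_self_time (h : MetrisabilityEqWith (newtonianConnection N G) σ μ) {i : Fin n}
    (hiN : i ≠ N) (x : Fin n → ℝ) : pdv i (σ i N) x = μ N x := by
  simpa [covUp_newtonianConnection, hiN, hiN.symm] using h i i N x

theorem pdv_time_time (h : MetrisabilityEqWith (newtonianConnection N G) σ μ)
    (hGN : ∀ x, G N x = 0) (x : Fin n → ℝ) : pdv N (σ N N) x = μ N x + μ N x := by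
  simpa [covUp_newtonianConnection, hGN] using h N N N x

theorem pdv_time_space_time (h : MetrisabilityEqWith (newtonianConnection N G) σ μ)
    (hGN : ∀ x, G N x = 0) {i : Fin n} (hiN : i ≠ N) (x : Fin n → ℝ) :
    pdv N (σ i N) x + G i x * σ N N x = μ i x := by
  simpa [covUp_newtonianConnection, hGN, hiN] using h N i N x

theorem pdv_time_space_space (h : MetrisabilityEqWith (newtonianConnection N G) σ μ)
    (hs : ∀ a b x, σ a b x = σ b a x) {i j : Fin n} (hiN : i ≠ N) (hjN : j ≠ N)
    (x : Fin n → ℝ) : pdv N (σ i j) x + (G i x * σ j N x + G j x * σ i N x) = 0 := by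
  simpa [covUp_newtonianConnection, hiN, hjN, hs N j] using h N i j x

variable (h : MetrisabilityEqWith (newtonianConnection N G) σ μ) (hG : IsCoupledForce N G)
  (hs : ∀ a b x, σ a b x = σ b a x) (hd : ∀ a b, Differentiable ℝ (σ a b))
include h hG hd

theorem time_time_eq_zero (x : Fin n → ℝ) : σ N N x = 0 := by
  obtain ⟨i, k, t, hkN, hki, -, hne⟩ := hG.exists_ne N x
  have hiN : i ≠ N := hG.ne_time_of_apply_ne hne
  set y := x + Pi.single k t
  have hσ : σ N N y = σ N N x :=
    apply_add_single_of_pdv_eq_zero (hd N N) (h.pdv_eq_zero hkN hkN hkN) x t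
  have hdσ : pdv N (σ i N) y = pdv N (σ i N) x :=
    pdv_add_single_of_pdv_eq_zero (hd i N) (h.pdv_eq_zero hkN hki hkN) N x t
  have hμ : μ i y = μ i x := by
    have := pdv_add_single_of_pdv_eq_zero (hd i i) (h.pdv_eq_zero hkN hki hki) i x t
    rw [h.pdv_self_self hiN, h.pdv_self_self hiN] at this
    linarith
  have hy := h.pdv_time_space_time hG.time_eq_zero hiN y
  rw [hσ, hdσ, hμ] at hy
  have hx := h.pdv_time_space_time hG.time_eq_zero hiN x
  have hmul : (G i y - G i x) * σ N N x = 0 := by linarith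
  exact (mul_eq_zero.1 hmul).resolve_left (sub_ne_zero.2 hne)

theorem mu_time_eq_zero (x : Fin n → ℝ) : μ N x = 0 := by
  have hpdv : pdv N (σ N N) x = 0 := pdv_eq_zero_of_forall_eq
    (fun y z => by rw [h.time_time_eq_zero hG hd y, h.time_time_eq_zero hG hd z]) N x
  linarith [h.pdv_time_time hG.time_eq_zero x]

theorem pdv_space_time_eq_zero {k : Fin n} (hkN : k ≠ N) (j : Fin n) (x : Fin n → ℝ) :
    pdv k (σ j N) x = 0 := by
  rcases eq_or_ne k j with rfl | hkj
  · rw [h.pdv_self_time hkN, h.mu_time_eq_zero hG hd]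
  · exact h.pdv_eq_zero hkN hkj hkN x

include hs

theorem time_components_add_single {i j k : Fin n} (hiN : i ≠ N) (hjN : j ≠ N) (hkN : k ≠ N)
    (hki : k ≠ i) (hkj : k ≠ j) (x : Fin n → ℝ) (t : ℝ) :
    (G i (x + Pi.single k t) - G i x) * σ j N x +
      (G j (x + Pi.single k t) - G j x) * σ i N x = 0 := by
  have hσ (l : Fin n) : σ l N (x + Pi.single k t) = σ l N x :=
    apply_add_single_of_pdv_eq_zero (hd l N) (h.pdv_space_time_eq_zero hG hd hkN l) x t
  have hdσ : pdv N (σ i j) (x + Pi.single k t) = pdv N (σ i j) x :=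
    pdv_add_single_of_pdv_eq_zero (hd i j) (h.pdv_eq_zero hkN hki hkj) N x t
  have hy := h.pdv_time_space_space hs hiN hjN (x + Pi.single k t)
  rw [hσ, hσ, hdσ] at hy
  linarith [h.pdv_time_space_space hs hiN hjN x]

theorem time_component_eq_zero (j : Fin n) (x : Fin n → ℝ) : σ j N x = 0 := by
  rcases eq_or_ne j N with rfl | hjN
  · exact h.time_time_eq_zero hG hd x
  obtain ⟨i, k, t, hkN, hki, hkj, hne⟩ := hG.exists_ne j x
  have hiN : i ≠ N := hG.ne_time_of_apply_ne hne
  have hΔ : G i (x + Pi.single k t) - G i x ≠ 0 := sub_ne_zero.2 hne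
  have hi : σ i N x = 0 := by
    have := h.time_components_add_single hG hs hd hiN hiN hkN hki hki x t
    simpa [← two_mul, hΔ] using this
  simpa [hi, hΔ] using h.time_components_add_single hG hs hd hiN hjN hkN hki hkj x t

theorem mu_eq_zero (i : Fin n) (x : Fin n → ℝ) : μ i x = 0 := by
  rcases eq_or_ne i N with rfl | hiN
  · exact h.mu_time_eq_zero hG hd x
  have hσ := h.time_component_eq_zero hG hs hd
  rw [← h.pdv_time_space_time hG.time_eq_zero hiN, hσ N, mul_zero, add_zero]
  exact pdv_eq_zero_of_forall_eq (fun y z => by rw [hσ i y, hσ i z]) N x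

theorem apply_eq_apply (b c : Fin n) (x y : Fin n → ℝ) : σ b c x = σ b c y := by
  refine apply_eq_apply_of_pdv_eq_zero (hd b c) (fun a z => ?_) x y
  have hσ := h.time_component_eq_zero hG hs hd
  simpa [covUp_newtonianConnection, h.mu_eq_zero hG hs hd, hs N c, hσ] using h a b c z

end MetrisabilityEqWith

theorem metrisabilityEq_newtonianConnection_of_const (hs : ∀ a b x, σ a b x = σ b a x)
    (hN : ∀ a x, σ a N x = 0) (hc : ∀ k l, k ≠ N → l ≠ N → ∀ x y, σ k l x = σ k l y) :
    MetrisabilityEq (newtonianConnection N G) σ := by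
  have hconst (b c : Fin n) (x y : Fin n → ℝ) : σ b c x = σ b c y := by
    rcases eq_or_ne c N with rfl | hcN
    · rw [hN, hN]
    rcases eq_or_ne b N with rfl | hbN
    · rw [hs, hN, hs, hN]
    exact hc b c hbN hcN x y
  refine ⟨0, fun a b c x => ?_⟩
  simp [covUp_newtonianConnection, pdv_eq_zero_of_forall_eq (hconst b c), hs N c, hN]

theorem metrisabilityEq_newtonianConnection_iff (hG : IsCoupledForce N G)
    (hs : ∀ a b x, σ a b x = σ b a x) (hd : ∀ a b, Differentiable ℝ (σ a b)) :
    MetrisabilityEq (newtonianConnection N G) σ ↔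
      (∀ a x, σ a N x = 0) ∧ ∀ k l, k ≠ N → l ≠ N → ∀ x y, σ k l x = σ k l y := by
  constructor
  · rintro ⟨μ, h⟩
    exact ⟨h.time_component_eq_zero hG hs hd, fun k l _ _ => h.apply_eq_apply hG hs hd k l⟩
  · rintro ⟨hN, hc⟩
    exact metrisabilityEq_newtonianConnection_of_const hs hN hc

end NewtonianConnection

section SolutionSpace

variable {n : ℕ} {N : Fin n} {G : Fin n → (Fin n → ℝ) → ℝ}
  {σ : Fin n → Fin n → (Fin n → ℝ) → ℝ}

/-- The constant symmetric tensor field with given space components and zero time components.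
Unordered pairs of space indices serve as coordinates on the space of such fields. -/
def constSpaceTensor (N : Fin n) :
    (Sym2 {a // a ≠ N} → ℝ) →ₗ[ℝ] Fin n → Fin n → (Fin n → ℝ) → ℝ where
  toFun s a b _ := if h : a ≠ N ∧ b ≠ N then s s(⟨a, h.1⟩, ⟨b, h.2⟩) else 0
  map_add' s t := by
    ext a b x
    by_cases h : a ≠ N ∧ b ≠ N <;> simp [h]
  map_smul' r s := by
    ext a b x
    by_cases h : a ≠ N ∧ b ≠ N <;> simp [h]

theorem constSpaceTensor_injective (N : Fin n) : Function.Injective (constSpaceTensor N) := by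
  intro s t hst
  ext z
  induction z with
  | _ a b => simpa [constSpaceTensor, a.2, b.2] using congrFun₃ hst a b 0

theorem mem_range_constSpaceTensor_iff :
    σ ∈ LinearMap.range (constSpaceTensor N) ↔ (∀ a b x, σ a b x = σ b a x) ∧
      (∀ a x, σ a N x = 0) ∧ ∀ k l, k ≠ N → l ≠ N → ∀ x y, σ k l x = σ k l y := by
  constructor
  · rintro ⟨s, rfl⟩
    refine ⟨fun a b x => ?_, fun a x => by simp [constSpaceTensor], fun _ _ _ _ _ _ => rfl⟩
    simp only [constSpaceTensor, LinearMap.coe_mk, AddHom.coe_mk, and_comm, Sym2.eq_swap]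
  · rintro ⟨hs, hN, hc⟩
    refine ⟨Sym2.lift ⟨fun a b => σ a b 0, fun a b => hs a b 0⟩, ?_⟩
    ext a b x
    by_cases ha : a = N
    · simp [constSpaceTensor, ha, hs N, hN]
    by_cases hb : b = N
    · simp [constSpaceTensor, hb, hN]
    simpa [constSpaceTensor, ha, hb] using hc a b ha hb 0 x

theorem contDiff_of_mem_range_constSpaceTensor (h : σ ∈ LinearMap.range (constSpaceTensor N))
    {r : WithTop ℕ∞} (a b : Fin n) : ContDiff ℝ r (σ a b) := by
  obtain ⟨s, rfl⟩ := h
  exact contDiff_const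

theorem isMetrisabilitySolution_iff_mem_range (hG : IsCoupledForce N G) :
    IsMetrisabilitySolution (newtonianConnection N G) σ ↔
      σ ∈ LinearMap.range (constSpaceTensor N) := by
  constructor
  · rintro ⟨hs, hd, h⟩
    exact mem_range_constSpaceTensor_iff.2
      ⟨hs, (metrisabilityEq_newtonianConnection_iff hG hs hd).1 h⟩
  · intro h
    obtain ⟨hs, hN, hc⟩ := mem_range_constSpaceTensor_iff.1 h
    exact ⟨hs, fun a b => (contDiff_of_mem_range_constSpaceTensor h a b).differentiable one_ne_zero,
      metrisabilityEq_newtonianConnection_of_const hs hN hc⟩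

theorem finrank_range_constSpaceTensor (N : Fin n) :
    Module.finrank ℝ (LinearMap.range (constSpaceTensor N)) = n * (n - 1) / 2 := by
  have hn : n - 1 + 1 = n := Nat.sub_add_cancel N.pos
  rw [LinearMap.finrank_range_of_inj (constSpaceTensor_injective N),
    Module.finrank_fintype_fun_eq_card, Sym2.card, Fintype.card_subtype_compl, Fintype.card_fin,
    Fintype.card_unique, hn, Nat.choose_two_right]

theorem sum_smul_eq_zero_iff_forall {ι : Type*} [Fintype ι] (c : ι → ℝ)
    (σs : ι → Fin n → Fin n → (Fin n → ℝ) → ℝ) :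
    ∑ i, c i • σs i = 0 ↔ ∀ a b x, ∑ i, c i * σs i a b x = 0 := by
  simp [funext_iff]

end SolutionSpace

theorem newtonian_metrisability_general {n : ℕ} {N : Fin n} {G : Fin n → (Fin n → ℝ) → ℝ}
    (hG : IsCoupledForce N G) :
    (∀ σ : Fin n → Fin n → (Fin n → ℝ) → ℝ,
      (∀ a b x, σ a b x = σ b a x) → (∀ a b, Differentiable ℝ (σ a b)) →
      (MetrisabilityEq (newtonianConnection N G) σ ↔
        (∀ a x, σ a N x = 0) ∧ ∀ k l, k ≠ N → l ≠ N → ∀ x y, σ k l x = σ k l y))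
    ∧ (∀ σ, IsMetrisabilitySolution (newtonianConnection N G) σ →
        ∀ x, (Matrix.of fun a b => σ a b x).det = 0)
    ∧ (∀ σs : Fin (n * (n - 1) / 2 + 1) → Fin n → Fin n → (Fin n → ℝ) → ℝ,
        (∀ i, IsMetrisabilitySolution (newtonianConnection N G) (σs i)) →
        ∃ c : Fin (n * (n - 1) / 2 + 1) → ℝ, c ≠ 0 ∧ ∀ a b x, ∑ i, c i * σs i a b x = 0)
    ∧ (∃ σs : Fin (n * (n - 1) / 2) → Fin n → Fin n → (Fin n → ℝ) → ℝ,
        (∀ i, IsMetrisabilitySolution (newtonianConnection N G) (σs i)) ∧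
        ∀ c : Fin (n * (n - 1) / 2) → ℝ, (∀ a b x, ∑ i, c i * σs i a b x = 0) → c = 0) := by
  simp only [isMetrisabilitySolution_iff_mem_range hG, ← sum_smul_eq_zero_iff_forall]
  refine ⟨fun σ => metrisabilityEq_newtonianConnection_iff hG, fun σ hσ x => ?_,
    fun σs hσs => ?_, ?_⟩
  · have hN := (mem_range_constSpaceTensor_iff.1 hσ).2.1
    exact Matrix.det_eq_zero_of_column_eq_zero N fun a => hN a x
  · exact exists_sum_smul_eq_zero_of_finrank_lt hσs (by simp [finrank_range_constSpaceTensor])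
  · rw [← finrank_range_constSpaceTensor N]
    obtain ⟨σs, hmem, hli⟩ := exists_linearIndependent_fin_finrank (constSpaceTensor N).range
    exact ⟨σs, hmem, fun c hc => funext (Fintype.linearIndependent_iff.1 hli c hc)⟩

section ProductPotential

variable {m : ℕ} {σ : Fin (m + 3) → Fin (m + 3) → (Fin (m + 3) → ℝ) → ℝ}

/-- The components `Γ^a_{nn}` of `newtonGamma`, i.e. minus one half of the gradient of
`V = x¹x²`. -/
noncomputable def productForce (m : ℕ) (a : Fin (m + 3)) (x : Fin (m + 3) → ℝ) : ℝ :=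
  if a = 0 then -(x 1) / 2 else if a = 1 then -(x 0) / 2 else 0

theorem newtonGamma_eq_newtonianConnection (m : ℕ) :
    newtonGamma m = newtonianConnection (Fin.last (m + 2)) (productForce m) := by
  ext a b c x
  by_cases h : b = Fin.last (m + 2) ∧ c = Fin.last (m + 2) <;>
    simp [newtonGamma, newtonianConnection, productForce, h]

theorem isCoupledForce_productForce (m : ℕ) :
    IsCoupledForce (Fin.last (m + 2)) (productForce m) where
  time_eq_zero x := by simp [productForce, Fin.ext_iff]
  exists_ne j x := by
    rcases eq_or_ne j 1 with rfl | hj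
    · exact ⟨1, 0, 1, by simp [Fin.ext_iff], by simp, by simp, by simp [productForce]⟩
    · exact ⟨0, 1, 1, by simp [Fin.ext_iff], by simp, hj.symm, by simp [productForce]⟩

theorem newtonMet_iff_metrisabilityEq : NewtonMet m σ ↔
    MetrisabilityEq (newtonianConnection (Fin.last (m + 2)) (productForce m)) σ := by
  rw [← newtonGamma_eq_newtonianConnection]
  rfl

theorem newtonSol_iff_isMetrisabilitySolution : NewtonSol m σ ↔
    IsMetrisabilitySolution (newtonianConnection (Fin.last (m + 2)) (productForce m)) σ := by
  constructor
  · rintro ⟨hs, hd, h⟩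
    exact ⟨hs, fun a b => (hd a b).differentiable one_ne_zero, newtonMet_iff_metrisabilityEq.1 h⟩
  · intro h
    have hmem := (isMetrisabilitySolution_iff_mem_range (isCoupledForce_productForce m)).1 h
    exact ⟨h.symm, contDiff_of_mem_range_constSpaceTensor hmem,
      newtonMet_iff_metrisabilityEq.2 h.metrisabilityEq⟩

end ProductPotential

/-- For the Newtonian connection of the potential `V = x¹x²` on `ℝⁿ`, `n = m + 3 ≥ 3`:
a symmetric `C¹` tensor `σ` solves the metrisability equations iff `σ^{an} = 0` and all
components `σ^{kl}` with `k, l ≤ n − 1` are constant; in particular the solution space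
has dimension exactly `n(n−1)/2` and every solution is degenerate. -/
theorem newtonian_metrisability (m : ℕ) :
    (∀ σ : Fin (m + 3) → Fin (m + 3) → (Fin (m + 3) → ℝ) → ℝ,
      (∀ a b x, σ a b x = σ b a x) → (∀ a b, ContDiff ℝ 1 (σ a b)) →
      (NewtonMet m σ ↔
        ((∀ (a : Fin (m + 3)) (x : Fin (m + 3) → ℝ), σ a (Fin.last (m + 2)) x = 0)
          ∧ (∀ k l : Fin (m + 3), k ≠ Fin.last (m + 2) → l ≠ Fin.last (m + 2) →
              ∀ x y : Fin (m + 3) → ℝ, σ k l x = σ k l y))))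
    ∧ (∀ σ : Fin (m + 3) → Fin (m + 3) → (Fin (m + 3) → ℝ) → ℝ, NewtonSol m σ →
        ∀ x : Fin (m + 3) → ℝ, (Matrix.of fun a b => σ a b x).det = 0)
    ∧ (∀ σs : Fin ((m + 3) * (m + 2) / 2 + 1) →
          Fin (m + 3) → Fin (m + 3) → (Fin (m + 3) → ℝ) → ℝ,
        (∀ i, NewtonSol m (σs i)) →
        ∃ c : Fin ((m + 3) * (m + 2) / 2 + 1) → ℝ, c ≠ 0 ∧
          ∀ (a b : Fin (m + 3)) (x : Fin (m + 3) → ℝ), ∑ i, c i * σs i a b x = 0)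
    ∧ (∃ σs : Fin ((m + 3) * (m + 2) / 2) →
          Fin (m + 3) → Fin (m + 3) → (Fin (m + 3) → ℝ) → ℝ,
        (∀ i, NewtonSol m (σs i)) ∧
        ∀ c : Fin ((m + 3) * (m + 2) / 2) → ℝ,
          (∀ (a b : Fin (m + 3)) (x : Fin (m + 3) → ℝ), ∑ i, c i * σs i a b x = 0)
          → c = 0) := by
  simp only [newtonMet_iff_metrisabilityEq, newtonSol_iff_isMetrisabilitySolution]
  obtain ⟨hiff, hsol⟩ := newtonian_metrisability_general (isCoupledForce_productForce m)
  exact ⟨fun σ hs hc => hiff σ hs fun a b => (hc a b).differentiable one_ne_zero, hsol⟩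
end
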